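/- Suppose there exists L > 0 such that the map l ↦ A(l) restricted to [0, L] is a continuous, strictly increasing bijection from [0, L] onto [0, 1] with inverse A⁻¹, and suppose moreover there exist γ ∈ [0, 1) and nonnegative reals c_0, c_1, c_2, … such that A⁻¹(w) = Σ_{j=0}^∞ c_j · w^{j+γ} for all w ∈ [0, 1] (the series converging pointwise on [0, 1]). Then E[D_k(N)] = Σ_{j=0}^∞ c_j · (Γ(k + j + γ)/Γ(k)) · (Γ(N + 1)/Γ(N + j + γ + 1)). -/

import Mathlib

open MeasureTheory Metric Filter
open scoped ENNReal Topology

/-- The `k`-th smallest value (1-indexed) among the `N` real numbers `f 0, …, f (N-1)`. -/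
noncomputable def kthVal {N : ℕ} (k : ℕ) (f : Fin N → ℝ) : ℝ :=
  (((Finset.univ : Finset (Fin N)).val.map f).sort (· ≤ ·)).getD (k - 1) 0

/-! Let `ν` be the law of `dist x X₁` and `F` its cumulative distribution function, so that `F = A`.
Being monotone with range containing `[0, 1]`, `F` is continuous, and `F (D_k)` is then the `k`-th
order statistic of `N` independent uniform variables: the event `F (D_k) ≤ u` says that at least `k`
of `N` independent trials of success probability `u` succeed, which has probability `∑ B_{N,m} u`
over `m ≥ k`, where `B_{N,m}` are the Bernstein polynomials. The derivative of this sum telescopes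
to the density of the Beta distribution with parameters `k` and `N - k + 1`. Almost surely `D_k =
A⁻¹ (F (D_k)) = ∑ c_j F (D_k) ^ (j + γ)`, a series dominated by `∑ |c_j|`, which is finite because
the series for `A⁻¹` converges at `w = 1`. So the expectation may be taken term by term, and each
term is a moment of the Beta distribution.
-/

open ProbabilityTheory Set
open scoped unitInterval

lemma getElem_le_iff_lt_countP {α : Type*} [LinearOrder α] {l : List α} (hl : l.Pairwise (· ≤ ·))
    {n : ℕ} (hn : n < l.length) {t : α} : l[n] ≤ t ↔ n < l.countP (· ≤ t) := by
  induction l generalizing n with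
  | nil => exact absurd hn n.not_lt_zero
  | cons a l ih =>
    obtain ⟨ha, hl⟩ := List.pairwise_cons.1 hl
    by_cases hat : a ≤ t
    · cases n with
      | zero => simp [hat]
      | succ n => simpa [hat] using ih hl (by simpa using hn)
    · have hlt : ∀ b ∈ a :: l, ¬ b ≤ t :=
        List.forall_mem_cons.2 ⟨hat, fun b hb hbt => hat ((ha b hb).trans hbt)⟩
      have hcount : (a :: l).countP (· ≤ t) = 0 :=
        List.countP_eq_zero.2 fun b hb => by simpa using hlt b hb
      simp only [hcount, hlt _ (List.getElem_mem hn), Nat.not_lt_zero]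

section Sampling

variable {ι E : Type*} [MeasurableSpace E] {B : Set E}

lemma measurable_setOf_mem (hB : MeasurableSet B) :
    Measurable fun ω : ι → E => {i | ω i ∈ B} :=
  measurable_set_iff.2 fun i => (measurable_mem.2 hB).comp (measurable_pi_apply i)

variable [Fintype ι] {μ : Measure E} [IsProbabilityMeasure μ]

lemma map_setOf_mem_pi (hB : MeasurableSet B) {p : I} (hp : μ.real B = p) :
    (Measure.pi fun _ : ι => μ).map (fun ω => {i | ω i ∈ B}) = setBernoulli univ p := by
  classical
  have hpB : (unitInterval.toNNReal p : ℝ≥0∞) = μ B := by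
    rw [← ofReal_measureReal, hp]
    exact (ENNReal.ofReal_eq_coe_nnreal p.2.1).symm
  have hpBc : (unitInterval.toNNReal (σ p) : ℝ≥0∞) = μ Bᶜ := by
    rw [← ofReal_measureReal, probReal_compl_eq_one_sub hB, hp]
    exact (ENNReal.ofReal_eq_coe_nnreal (σ p).2.1).symm
  refine Measure.ext_of_singleton fun s => ?_
  have hpre : (fun ω : ι → E => {i | ω i ∈ B}) ⁻¹' {s} =
      univ.pi fun i => if i ∈ s then B else Bᶜ := by
    ext ω
    simp only [mem_preimage, mem_singleton_iff, Set.ext_iff, mem_ofPred_eq, mem_univ_pi]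
    refine forall_congr' fun i => ?_
    by_cases hi : i ∈ s <;> simp [hi]
  rw [Measure.map_apply (measurable_setOf_mem hB) (measurableSet_singleton s), hpre,
    Measure.pi_pi, setBernoulli_singleton p (subset_univ s) finite_univ, hpB, hpBc]
  simp only [apply_ite μ, Finset.prod_ite, Finset.prod_const, ← compl_eq_univ_sdiff,
    ← ncard_coe_finset, Finset.coe_filter_univ]
  rfl

lemma pi_real_ncard_setOf_mem_eq (hB : MeasurableSet B) (m : ℕ) :
    (Measure.pi fun _ : ι => μ).real {ω | {i | ω i ∈ B}.ncard = m} =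
      (bernsteinPolynomial ℝ (Fintype.card ι) m).eval (μ.real B) := by
  let p : I := ⟨μ.real B, measureReal_nonneg, measureReal_le_one⟩
  have hp : μ.real B = p := rfl
  have hmeas := measurable_setOf_mem (ι := ι) hB
  have hlaw := map_ncard_setBernoulli_real_singleton (finite_univ (α := ι)) p m
  rw [← map_setOf_mem_pi hB hp, Measure.map_map (by fun_prop) hmeas,
    map_measureReal_apply (by fun_prop) (measurableSet_singleton m)] at hlaw
  simpa [bernsteinPolynomial, hp] using! hlaw

lemma pi_real_le_ncard_setOf_mem (hB : MeasurableSet B) (k : ℕ) :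
    (Measure.pi fun _ : ι => μ).real {ω | k ≤ {i | ω i ∈ B}.ncard} =
      ∑ m ∈ Finset.Ico k (Fintype.card ι + 1),
        (bernsteinPolynomial ℝ (Fintype.card ι) m).eval (μ.real B) := by
  have hunion : {ω : ι → E | k ≤ {i | ω i ∈ B}.ncard} =
      ⋃ m ∈ Finset.Ico k (Fintype.card ι + 1), {ω | {i | ω i ∈ B}.ncard = m} := by
    ext ω
    have hcard : {i | ω i ∈ B}.ncard ≤ Fintype.card ι := by
      simpa using ncard_le_card {i | ω i ∈ B}
    simpa using fun _ => Order.lt_add_one_iff.2 hcard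
  have hmeas (m : ℕ) : MeasurableSet {ω : ι → E | {i | ω i ∈ B}.ncard = m} :=
    (measurable_setOf_mem hB) (.of_discrete (s := {s : Set ι | s.ncard = m}))
  rw [hunion, measureReal_biUnion_finset (fun _ _ _ _ h => ?_) (fun m _ => hmeas m)]
  · simp_rw [pi_real_ncard_setOf_mem_eq hB]
  · exact Set.disjoint_left.2 fun ω h₁ h₂ => h (h₁.symm.trans h₂)

end Sampling

section OrderStatistic

variable {N k : ℕ}

lemma exists_kthVal_eq (hk : 1 ≤ k) (hkN : k ≤ N) (f : Fin N → ℝ) : ∃ i, kthVal k f = f i := by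
  set l := ((Finset.univ : Finset (Fin N)).val.map f).sort (· ≤ ·) with hl
  have hlength : l.length = N := by simp [hl]
  have hlt : k - 1 < l.length := by omega
  have hmem : l[k - 1] ∈ l := List.getElem_mem hlt
  obtain ⟨i, -, hi⟩ := Multiset.mem_map.1 ((Multiset.mem_sort _).1 hmem)
  exact ⟨i, (List.getD_eq_getElem l 0 hlt).trans hi.symm⟩

lemma kthVal_le_iff_le_ncard (hk : 1 ≤ k) (hkN : k ≤ N) (f : Fin N → ℝ) (t : ℝ) :
    kthVal k f ≤ t ↔ k ≤ {i | f i ≤ t}.ncard := by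
  set l := ((Finset.univ : Finset (Fin N)).val.map f).sort (· ≤ ·) with hl
  have hlength : l.length = N := by simp [hl]
  have hlt : k - 1 < l.length := by omega
  have hcount : l.countP (· ≤ t) = {i | f i ≤ t}.ncard := by
    rw [← Multiset.coe_countP, hl, Multiset.sort_eq, Multiset.countP_map, ncard_eq_toFinset_card',
      toFinset_ofPred]
    rfl
  have hkth : kthVal k f = l[k - 1] := List.getD_eq_getElem l 0 hlt
  rw [hkth, getElem_le_iff_lt_countP (Multiset.pairwise_sort _ _), hcount]
  omega

lemma setOf_kthVal_le (hk : 1 ≤ k) (hkN : k ≤ N) (t : ℝ) :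
    {f : Fin N → ℝ | kthVal k f ≤ t} = {f | k ≤ {i | f i ∈ Iic t}.ncard} :=
  Set.ext fun f => kthVal_le_iff_le_ncard hk hkN f t

lemma measurable_kthVal (hk : 1 ≤ k) (hkN : k ≤ N) :
    Measurable (kthVal k : (Fin N → ℝ) → ℝ) := by
  refine measurable_of_Iic fun t => ?_
  change MeasurableSet {f : Fin N → ℝ | kthVal k f ≤ t}
  rw [setOf_kthVal_le hk hkN]
  exact measurable_setOf_mem measurableSet_Iic
    (.of_discrete (s := {s : Set (Fin N) | k ≤ s.ncard}))

lemma pi_real_kthVal_le (hk : 1 ≤ k) (hkN : k ≤ N) (ν : Measure ℝ) [IsProbabilityMeasure ν]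
    (t : ℝ) :
    (Measure.pi fun _ : Fin N => ν).real {f | kthVal k f ≤ t} =
      ∑ m ∈ Finset.Ico k (N + 1), (bernsteinPolynomial ℝ N m).eval (cdf ν t) := by
  rw [setOf_kthVal_le hk hkN, pi_real_le_ncard_setOf_mem measurableSet_Iic, cdf_eq_real,
    Fintype.card_fin]

end OrderStatistic

section Beta

lemma derivative_sum_Ico_bernsteinPolynomial {R : Type*} [CommRing R] {n k : ℕ} (hkn : k ≤ n) :
    (∑ m ∈ Finset.Ico (k + 1) (n + 2), bernsteinPolynomial R (n + 1) m).derivative =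
      (n + 1) * bernsteinPolynomial R n k := by
  have hlast : bernsteinPolynomial R n (n + 1) = 0 :=
    bernsteinPolynomial.eq_zero_of_lt R n.lt_succ_self
  calc (∑ m ∈ Finset.Ico (k + 1) (n + 2), bernsteinPolynomial R (n + 1) m).derivative
      = ∑ m ∈ Finset.Ico k (n + 1),
          -((n + 1) * (bernsteinPolynomial R n (m + 1) - bernsteinPolynomial R n m)) := by
        rw [← Finset.sum_Ico_add' _ k (n + 1) 1, Polynomial.derivative_sum]
        refine Finset.sum_congr rfl fun m _ => ?_
        rw [bernsteinPolynomial.derivative_succ, Nat.add_sub_cancel]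
        push_cast
        ring
    _ = -((n + 1) * (bernsteinPolynomial R n (n + 1) - bernsteinPolynomial R n k)) := by
        rw [Finset.sum_neg_distrib, ← Finset.mul_sum,
          Finset.sum_Ico_sub (bernsteinPolynomial R n) (hkn.trans n.le_succ)]
    _ = (n + 1) * bernsteinPolynomial R n k := by rw [hlast]; ring

variable {a b : ℝ}

lemma betaPDFReal_nonneg (ha : 0 < a) (hb : 0 < b) (x : ℝ) : 0 ≤ betaPDFReal a b x := by
  by_cases hx : 0 < x ∧ x < 1
  · exact (betaPDFReal_pos hx.1 hx.2 ha hb).le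
  · exact (if_neg hx).ge

lemma measurable_betaPDF (a b : ℝ) : Measurable (betaPDF a b) :=
  (measurable_betaPDFReal a b).ennreal_ofReal

lemma betaMeasure_real_eq_setIntegral (ha : 0 < a) (hb : 0 < b) {s : Set ℝ}
    (hs : MeasurableSet s) : (betaMeasure a b).real s = ∫ x in s, betaPDFReal a b x := by
  rw [measureReal_def, betaMeasure, withDensity_apply _ hs, integral_eq_lintegral_of_nonneg_ae
    (ae_of_all _ (betaPDFReal_nonneg ha hb)) (by fun_prop)]
  rfl

lemma integral_betaPDFReal (ha : 0 < a) (hb : 0 < b) : ∫ x, betaPDFReal a b x = 1 := by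
  have := isProbabilityMeasureBeta ha hb
  rw [← setIntegral_univ, ← betaMeasure_real_eq_setIntegral ha hb .univ, probReal_univ]

lemma integrable_betaPDFReal (ha : 0 < a) (hb : 0 < b) : Integrable (betaPDFReal a b) :=
  .of_integral_ne_zero (by simp [integral_betaPDFReal ha hb])

lemma ae_betaMeasure_mem_Icc (a b : ℝ) : ∀ᵐ x ∂betaMeasure a b, x ∈ Icc (0 : ℝ) 1 := by
  rw [betaMeasure, ae_withDensity_iff (measurable_betaPDF a b)]
  refine ae_of_all _ fun x hx => ⟨?_, ?_⟩ <;> contrapose! hx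
  · exact betaPDF_eq_zero_of_nonpos hx.le
  · exact betaPDF_eq_zero_of_one_le hx.le

lemma betaPDFReal_mul_rpow {s : ℝ} (ha : 0 < a) (hb : 0 < b) (hs : 0 < a + s) (x : ℝ) :
    betaPDFReal a b x * x ^ s = beta (a + s) b / beta a b * betaPDFReal (a + s) b x := by
  by_cases hx : 0 < x ∧ x < 1
  · have hβ := (beta_pos ha hb).ne'
    have hβs := (beta_pos hs hb).ne'
    rw [betaPDFReal, betaPDFReal, if_pos hx, if_pos hx, add_sub_right_comm, Real.rpow_add hx.1]
    field_simp
  · simp [betaPDFReal, if_neg hx]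

lemma integral_rpow_betaMeasure {s : ℝ} (ha : 0 < a) (hb : 0 < b) (hs : 0 < a + s) :
    ∫ x, x ^ s ∂betaMeasure a b =
      Real.Gamma (a + s) / Real.Gamma a * (Real.Gamma (a + b) / Real.Gamma (a + b + s)) := by
  have hΓ := (Real.Gamma_pos_of_pos hb).ne'
  calc ∫ x, x ^ s ∂betaMeasure a b
      = ∫ x, betaPDFReal a b x * x ^ s := by
        rw [betaMeasure, integral_withDensity_eq_integral_toReal_smul (measurable_betaPDF a b)
          (ae_of_all _ fun _ => ENNReal.ofReal_lt_top)]
        simp only [betaPDF, ENNReal.toReal_ofReal (betaPDFReal_nonneg ha hb _), smul_eq_mul]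
    _ = beta (a + s) b / beta a b := by
        simp_rw [betaPDFReal_mul_rpow ha hb hs, integral_const_mul, integral_betaPDFReal hs hb,
          mul_one]
    _ = _ := by
        rw [beta, beta, add_right_comm a s b]
        field_simp

lemma betaPDFReal_natCast_add_one {n k : ℕ} (hkn : k ≤ n) {x : ℝ} (hx : x ∈ Ioo (0 : ℝ) 1) :
    betaPDFReal (k + 1) (n - k + 1) x = (n + 1) * (bernsteinPolynomial ℝ n k).eval x := by
  have hadd : (k + 1 : ℝ) + ((n - k : ℕ) + 1) = (n + 1 : ℕ) + 1 := by
    rw [Nat.cast_sub hkn]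
    push_cast
    ring
  have hbeta : beta (k + 1) ((n - k : ℕ) + 1) = ((n + 1) * n.choose k : ℝ)⁻¹ := by
    rw [beta, hadd, Real.Gamma_nat_eq_factorial, Real.Gamma_nat_eq_factorial,
      Real.Gamma_nat_eq_factorial, Nat.cast_choose ℝ hkn, Nat.factorial_succ]
    push_cast
    field_simp
  rw [betaPDFReal, if_pos (show 0 < x ∧ x < 1 from hx), ← Nat.cast_sub hkn, hbeta,
    add_sub_cancel_right, add_sub_cancel_right, Real.rpow_natCast, Real.rpow_natCast]
  simp [bernsteinPolynomial, mul_assoc]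

lemma cdf_betaMeasure_natCast_add_one {n k : ℕ} (hkn : k ≤ n) {t : ℝ} (ht : t ∈ Icc (0 : ℝ) 1) :
    cdf (betaMeasure (k + 1) (n - k + 1)) t =
      ∑ m ∈ Finset.Ico (k + 1) (n + 2), (bernsteinPolynomial ℝ (n + 1) m).eval t := by
  have ha : 0 < (k : ℝ) + 1 := by positivity
  have hb : 0 < (n : ℝ) - k + 1 := by rw [← Nat.cast_sub hkn]; positivity
  have := isProbabilityMeasureBeta ha hb
  set S : Polynomial ℝ := ∑ m ∈ Finset.Ico (k + 1) (n + 2), bernsteinPolynomial ℝ (n + 1) m with hS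
  have hderiv : ∀ x ∈ Ioo 0 t, HasDerivAt (S.eval ·) (betaPDFReal (k + 1) (n - k + 1) x) x := by
    intro x hx
    convert! S.hasDerivAt x using 1
    rw [derivative_sum_Ico_bernsteinPolynomial hkn,
      betaPDFReal_natCast_add_one hkn ⟨hx.1, hx.2.trans_le ht.2⟩]
    simp
  have hS0 : S.eval 0 = 0 := by
    rw [hS, Polynomial.eval_finsetSum]
    refine Finset.sum_eq_zero fun m hm => ?_
    rw [bernsteinPolynomial.eval_at_0, if_neg (by rintro rfl; simp at hm)]
  have hvanish : ∀ x ∈ Iic t \ Ioc 0 t, betaPDFReal (k + 1) (n - k + 1) x = 0 :=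
    fun x hx => if_neg fun h => hx.2 ⟨h.1, hx.1⟩
  calc cdf (betaMeasure (k + 1) (n - k + 1)) t
      = ∫ x in Iic t, betaPDFReal (k + 1) (n - k + 1) x := by
        rw [cdf_eq_real, betaMeasure_real_eq_setIntegral ha hb measurableSet_Iic]
    _ = ∫ x in 0..t, betaPDFReal (k + 1) (n - k + 1) x := by
        rw [intervalIntegral.integral_of_le ht.1, setIntegral_eq_of_subset_of_forall_sdiff_eq_zero
          measurableSet_Iic Ioc_subset_Iic_self hvanish]
    _ = S.eval t - S.eval 0 :=
        intervalIntegral.integral_eq_sub_of_hasDerivAt_of_le ht.1 S.continuous.continuousOn hderiv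
          (integrable_betaPDFReal ha hb).intervalIntegrable
    _ = _ := by rw [hS0, sub_zero, hS, Polynomial.eval_finsetSum]

lemma cdf_betaMeasure_natCast {N k : ℕ} (hk : 1 ≤ k) (hkN : k ≤ N) {t : ℝ}
    (ht : t ∈ Icc (0 : ℝ) 1) :
    cdf (betaMeasure k (N - k + 1)) t =
      ∑ m ∈ Finset.Ico k (N + 1), (bernsteinPolynomial ℝ N m).eval t := by
  obtain ⟨k, rfl⟩ := Nat.exists_eq_add_of_le' hk
  obtain ⟨n, rfl⟩ := Nat.exists_eq_add_of_le' (hk.trans hkN)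
  simpa using cdf_betaMeasure_natCast_add_one (Nat.le_of_succ_le_succ hkN) ht

end Beta

section Cdf

variable {μ : Measure ℝ} [IsProbabilityMeasure μ]

lemma cdf_eq_zero_of_ae_lt {t : ℝ} (h : ∀ᵐ x ∂μ, t < x) : cdf μ t = 0 := by
  rw [cdf_eq_real, measureReal_eq_zero_iff]
  exact measure_eq_zero_iff_ae_notMem.2 (h.mono fun x hx => hx.not_ge)

lemma cdf_eq_one_of_ae_le {t : ℝ} (h : ∀ᵐ x ∂μ, x ≤ t) : cdf μ t = 1 := by
  rw [cdf_eq_real, measureReal_def, ENNReal.toReal_eq_one_iff,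
    ← mem_ae_iff_prob_eq_one measurableSet_Iic]
  exact h

lemma eq_of_cdf_eqOn_Ioo {ν : Measure ℝ} [IsProbabilityMeasure ν] {a b : ℝ} (hab : a < b)
    (hμ : ∀ᵐ x ∂μ, x ∈ Icc a b) (hν : ∀ᵐ x ∂ν, x ∈ Icc a b)
    (h : EqOn (cdf μ) (cdf ν) (Ioo a b)) : μ = ν := by
  have hright (ρ : Measure ℝ) : Tendsto (cdf ρ) (𝓝[>] a) (𝓝 (cdf ρ a)) :=
    ((cdf ρ).right_continuous a).mono Ioi_subset_Ici_self
  have ha : cdf μ a = cdf ν a :=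
    tendsto_nhds_unique_of_eventuallyEq (hright μ) (hright ν)
      (mem_of_superset (Ioo_mem_nhdsGT hab) h)
  refine Measure.eq_of_cdf μ ν (StieltjesFunction.ext fun t => ?_)
  rcases lt_trichotomy t a with hta | rfl | hat
  · rw [cdf_eq_zero_of_ae_lt (hμ.mono fun x hx => hta.trans_le hx.1),
      cdf_eq_zero_of_ae_lt (hν.mono fun x hx => hta.trans_le hx.1)]
  · exact ha
  · rcases lt_or_ge t b with htb | hbt
    · exact h ⟨hat, htb⟩
    · rw [cdf_eq_one_of_ae_le (hμ.mono fun x hx => hx.2.trans hbt),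
        cdf_eq_one_of_ae_le (hν.mono fun x hx => hx.2.trans hbt)]

end Cdf

section Monotone

variable {α β : Type*} [TopologicalSpace α] [LinearOrder β] [TopologicalSpace β]

lemma continuous_of_monotone_of_Icc_subset_range [LinearOrder α] [OrderTopology α]
    [OrderTopology β] [DenselyOrdered β] {F : α → β} {a b : β} (hF : Monotone F)
    (hmem : ∀ l, F l ∈ Icc a b) (hrange : Icc a b ⊆ range F) : Continuous F := by
  have hmono : Monotone (codRestrict F (Icc a b) hmem) := fun _ _ h => hF h
  refine continuous_subtype_val.comp (hmono.continuous_of_surjective fun ⟨u, hu⟩ => ?_)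
  exact (hrange hu).imp fun _ => Subtype.ext

lemma exists_eq_and_forall_le_iff_le [ConditionallyCompleteLinearOrder α] [OrderTopology α]
    [DenselyOrdered α] [OrderClosedTopology β] {F : α → β} (hF : Monotone F) (hFc : Continuous F)
    {a b : α} {u : β} (ha : F a ≤ u) (hb : u < F b) : ∃ l, F l = u ∧ ∀ x, F x ≤ u ↔ x ≤ l := by
  have hbdd : BddAbove {x | F x ≤ u} := ⟨b, fun x hx => (hF.reflect_lt (hx.trans_lt hb)).le⟩
  have hmem : F (sSup {x | F x ≤ u}) ≤ u :=
    (isClosed_le hFc continuous_const).csSup_mem ⟨a, ha⟩ hbdd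
  obtain ⟨l, hl⟩ : u ∈ range F := mem_range_of_exists_le_of_exists_ge hFc ⟨a, ha⟩ ⟨b, hb.le⟩
  have hle : l ≤ sSup {x | F x ≤ u} := le_csSup hbdd hl.le
  exact ⟨_, le_antisymm hmem (hl.ge.trans (hF hle)),
    fun x => ⟨fun hx => le_csSup hbdd hx, fun hx => (hF hx).trans hmem⟩⟩

end Monotone

section ContinuousCdf

variable {N k : ℕ} {ν : Measure ℝ} [IsProbabilityMeasure ν]

lemma measurable_cdf_kthVal (hk : 1 ≤ k) (hkN : k ≤ N) (ν : Measure ℝ) :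
    Measurable fun f : Fin N → ℝ => cdf ν (kthVal k f) :=
  (monotone_cdf ν).measurable.comp (measurable_kthVal hk hkN)

theorem map_cdf_kthVal_pi (hk : 1 ≤ k) (hkN : k ≤ N) (hν : Continuous (cdf ν)) :
    (Measure.pi fun _ : Fin N => ν).map (fun f => cdf ν (kthVal k f)) =
      betaMeasure k (N - k + 1) := by
  have hmeas := measurable_cdf_kthVal hk hkN ν
  have hkN' : (k : ℝ) ≤ N := by exact_mod_cast hkN
  have := isProbabilityMeasureBeta (α := k) (β := N - k + 1) (by positivity) (by linarith)
  have := Measure.isProbabilityMeasure_map (μ := Measure.pi fun _ : Fin N => ν) hmeas.aemeasurable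
  refine eq_of_cdf_eqOn_Ioo zero_lt_one ?_ (ae_betaMeasure_mem_Icc _ _) fun u hu => ?_
  · exact (ae_map_iff hmeas.aemeasurable measurableSet_Icc).2 <|
      ae_of_all _ fun f => ⟨cdf_nonneg ν _, cdf_le_one ν _⟩
  · obtain ⟨a, ha⟩ := ((tendsto_cdf_atBot ν).eventually_le_const hu.1).exists
    obtain ⟨b, hb⟩ := ((tendsto_cdf_atTop ν).eventually_const_lt hu.2).exists
    obtain ⟨l, hl, hle⟩ := exists_eq_and_forall_le_iff_le (monotone_cdf ν) hν ha hb
    have hpre : (fun f : Fin N → ℝ => cdf ν (kthVal k f)) ⁻¹' Iic u = {f | kthVal k f ≤ l} :=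
      Set.ext fun f => hle (kthVal k f)
    rw [cdf_eq_real, map_measureReal_apply hmeas measurableSet_Iic, hpre,
      pi_real_kthVal_le hk hkN, hl, cdf_betaMeasure_natCast hk hkN ⟨hu.1.le, hu.2.le⟩]

lemma integral_cdf_kthVal_rpow_pi (hk : 1 ≤ k) (hkN : k ≤ N) (hν : Continuous (cdf ν)) {s : ℝ}
    (hs : 0 < k + s) :
    ∫ f, cdf ν (kthVal k f) ^ s ∂(Measure.pi fun _ : Fin N => ν) =
      Real.Gamma (k + s) / Real.Gamma k * (Real.Gamma (N + 1) / Real.Gamma (N + s + 1)) := by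
  have hk0 : (0 : ℝ) < k := by exact_mod_cast hk
  have hkN' : (k : ℝ) ≤ N := by exact_mod_cast hkN
  rw [← integral_map (φ := fun f : Fin N → ℝ => cdf ν (kthVal k f)) (f := (· ^ s))
      (measurable_cdf_kthVal hk hkN ν).aemeasurable (by fun_prop),
    map_cdf_kthVal_pi hk hkN hν, integral_rpow_betaMeasure hk0 (by linarith) hs,
    show (k : ℝ) + (N - k + 1) = N + 1 by ring, add_right_comm (N : ℝ)]

theorem hasSum_integral_kthVal_pi (hk : 1 ≤ k) (hkN : k ≤ N) (hν : Continuous (cdf ν))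
    {ι : Type*} [Countable ι] {c s : ι → ℝ} (hc : Summable c) (hs : ∀ i, 0 ≤ s i)
    (hser : ∀ᵐ y ∂ν, HasSum (fun i => c i * cdf ν y ^ s i) y) :
    HasSum (fun i => c i * (Real.Gamma (k + s i) / Real.Gamma k) *
        (Real.Gamma (N + 1) / Real.Gamma (N + s i + 1)))
      (∫ f, kthVal k f ∂(Measure.pi fun _ : Fin N => ν)) := by
  have hmeas (i : ι) : Measurable fun f : Fin N → ℝ => c i * cdf ν (kthVal k f) ^ s i :=
    ((measurable_cdf_kthVal hk hkN ν).pow_const (s i)).const_mul (c i)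
  have hmoment (i : ι) : ∫ f, c i * cdf ν (kthVal k f) ^ s i ∂(Measure.pi fun _ : Fin N => ν) =
      c i * (Real.Gamma (k + s i) / Real.Gamma k) *
        (Real.Gamma (N + 1) / Real.Gamma (N + s i + 1)) := by
    have hks : (0 : ℝ) < k + s i := add_pos_of_pos_of_nonneg (by exact_mod_cast hk) (hs i)
    rw [integral_const_mul, integral_cdf_kthVal_rpow_pi hk hkN hν hks, mul_assoc]
  have hseries : ∀ᵐ f ∂(Measure.pi fun _ : Fin N => ν),
      HasSum (fun i => c i * cdf ν (kthVal k f) ^ s i) (kthVal k f) := by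
    have hcoord : ∀ᵐ f ∂(Measure.pi fun _ : Fin N => ν),
        ∀ j, HasSum (fun i => c i * cdf ν (f j) ^ s i) (f j) :=
      ae_all_iff.2 fun j =>
        (measurePreserving_eval (fun _ : Fin N => ν) j).quasiMeasurePreserving.ae hser
    filter_upwards [hcoord] with f hf
    obtain ⟨j, hj⟩ := exists_kthVal_eq hk hkN f
    exact hj ▸ hf j
  have hbound (i : ι) (f : Fin N → ℝ) : ‖c i * cdf ν (kthVal k f) ^ s i‖ ≤ ‖c i‖ := by
    have h0 := cdf_nonneg ν (kthVal k f)
    rw [norm_mul, Real.norm_of_nonneg (Real.rpow_nonneg h0 _)]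
    exact mul_le_of_le_one_right (norm_nonneg _) (Real.rpow_le_one h0 (cdf_le_one ν _) (hs i))
  simp_rw [← hmoment]
  exact hasSum_integral_of_dominated_convergence (fun i _ => ‖c i‖)
    (fun i => (hmeas i).aestronglyMeasurable) (fun i => ae_of_all _ (hbound i))
    (ae_of_all _ fun _ => hc.norm) (integrable_const _) hseries

end ContinuousCdf

section Distance

variable {M : Type*} [PseudoMetricSpace M] [MeasurableSpace M] [OpensMeasurableSpace M]

lemma measurable_dist_const_left (x : M) : Measurable (dist x) :=
  (continuous_const.dist continuous_id).measurable

variable (μ : Measure M) [IsProbabilityMeasure μ] (x : M)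

instance isProbabilityMeasure_map_dist : IsProbabilityMeasure (μ.map (dist x)) :=
  Measure.isProbabilityMeasure_map (measurable_dist_const_left x).aemeasurable

lemma cdf_map_dist (l : ℝ) : cdf (μ.map (dist x)) l = μ.real (closedBall x l) := by
  rw [cdf_eq_real, map_measureReal_apply (measurable_dist_const_left x) measurableSet_Iic]
  exact congrArg μ.real (Set.ext fun _ => mem_closedBall'.symm)

lemma integral_kthVal_pi_map_dist {N k : ℕ} (hk : 1 ≤ k) (hkN : k ≤ N) :
    ∫ f, kthVal k f ∂(Measure.pi fun _ : Fin N => μ.map (dist x)) =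
      ∫ ω, kthVal k (fun i => dist x (ω i)) ∂(Measure.pi fun _ : Fin N => μ) := by
  have hdist := measurable_dist_const_left x
  have hdists : Measurable fun (ω : Fin N → M) i => dist x (ω i) :=
    measurable_pi_lambda _ fun i => hdist.comp (measurable_pi_apply i)
  rw [← Measure.pi_map_pi fun _ => hdist.aemeasurable, integral_map hdists.aemeasurable
    (measurable_kthVal hk hkN).aestronglyMeasurable]

variable {μ x}

lemma ae_map_dist_mem_Icc {L : ℝ} (hL : μ.real (closedBall x L) = 1) :
    ∀ᵐ r ∂μ.map (dist x), r ∈ Icc 0 L := by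
  rw [measureReal_def, ENNReal.toReal_eq_one_iff,
    ← mem_ae_iff_prob_eq_one measurableSet_closedBall] at hL
  refine (ae_map_iff (measurable_dist_const_left x).aemeasurable measurableSet_Icc).2 ?_
  filter_upwards [hL] with y hy using ⟨dist_nonneg, mem_closedBall'.1 hy⟩

theorem kth_nearest_distance_series_general {N k : ℕ} (hk : 1 ≤ k) (hkN : k ≤ N) {L : ℝ}
    {Ainv : ℝ → ℝ} (hsurj : SurjOn (fun l => μ.real (closedBall x l)) (Icc 0 L) (Icc 0 1))
    (hinv : LeftInvOn Ainv (fun l => μ.real (closedBall x l)) (Icc 0 L))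
    {ι : Type*} [Countable ι] {c s : ι → ℝ} (hs : ∀ i, 0 ≤ s i)
    (hser : ∀ w ∈ Icc (0 : ℝ) 1, HasSum (fun i => c i * w ^ s i) (Ainv w)) :
    HasSum (fun i => c i * (Real.Gamma (k + s i) / Real.Gamma k) *
        (Real.Gamma (N + 1) / Real.Gamma (N + s i + 1)))
      (∫ ω, kthVal k (fun i => dist x (ω i)) ∂(Measure.pi fun _ : Fin N => μ)) := by
  have hcont : Continuous (cdf (μ.map (dist x))) :=
    continuous_of_monotone_of_Icc_subset_range (monotone_cdf _)
      (fun l => ⟨cdf_nonneg _ l, cdf_le_one _ l⟩) fun u hu =>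
        (hsurj hu).imp fun l hl => (cdf_map_dist μ x l).trans hl.2
  obtain ⟨l, hl, hl1⟩ := hsurj (right_mem_Icc.2 zero_le_one)
  have hseries : ∀ᵐ r ∂μ.map (dist x),
      HasSum (fun i => c i * cdf (μ.map (dist x)) r ^ s i) r := by
    filter_upwards [ae_map_dist_mem_Icc hl1] with r hr
    have hr' := hser (μ.real (closedBall x r)) ⟨measureReal_nonneg, measureReal_le_one⟩
    rwa [hinv ⟨hr.1, hr.2.trans hl.2⟩, ← cdf_map_dist] at hr'
  have hc : Summable c := by simpa using (hser 1 (right_mem_Icc.2 zero_le_one)).summable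
  rw [← integral_kthVal_pi_map_dist μ x hk hkN]
  exact hasSum_integral_kthVal_pi hk hkN hcont hc hs hseries

end Distance

/-- In the setting of a separable metric space `M` with Borel probability
measure `μ`, point `x`, `1 ≤ k ≤ N` and i.i.d. sites (product measure on `Fin N → M`):
suppose `A(l) = μ(closedBall x l)` restricted to `[0, L]` is a continuous strictly increasing
bijection onto `[0,1]` with inverse `Ainv`, and that moreover there are `γ ∈ [0,1)` and
nonnegative reals `c_j` with `Ainv w = ∑_j c_j w^(j+γ)` (the series converging pointwise)
for all `w ∈ [0,1]`.  Then
`E[D_k(N)] = ∑_j c_j (Γ(k+j+γ)/Γ(k)) (Γ(N+1)/Γ(N+j+γ+1))`. -/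
theorem kth_nearest_distance_series
    {M : Type*} [MetricSpace M] [TopologicalSpace.SeparableSpace M]
    [MeasurableSpace M] [BorelSpace M]
    (μ : Measure M) [IsProbabilityMeasure μ]
    (x : M) (N k : ℕ) (hN : 1 ≤ N) (hk : 1 ≤ k) (hkN : k ≤ N)
    (L : ℝ) (hL : 0 < L) (Ainv : ℝ → ℝ)
    (hcont : ContinuousOn (fun l => (μ (closedBall x l)).toReal) (Set.Icc 0 L))
    (hmono : StrictMonoOn (fun l => (μ (closedBall x l)).toReal) (Set.Icc 0 L))
    (hbij : Set.BijOn (fun l => (μ (closedBall x l)).toReal) (Set.Icc 0 L) (Set.Icc 0 1))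
    (hinv : Set.InvOn Ainv (fun l => (μ (closedBall x l)).toReal) (Set.Icc 0 L) (Set.Icc 0 1))
    (γ : ℝ) (hγ0 : 0 ≤ γ) (hγ1 : γ < 1) (c : ℕ → ℝ) (hc : ∀ j, 0 ≤ c j)
    (hsum : ∀ w ∈ Set.Icc (0:ℝ) 1, Summable fun j : ℕ => c j * w ^ ((j : ℝ) + γ))
    (hser : ∀ w ∈ Set.Icc (0:ℝ) 1, Ainv w = ∑' j : ℕ, c j * w ^ ((j : ℝ) + γ)) :
    ∫ ω : Fin N → M, kthVal k (fun i => dist x (ω i)) ∂(Measure.pi fun _ : Fin N => μ) =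
      ∑' j : ℕ, c j * (Real.Gamma (k + j + γ) / Real.Gamma k) *
        (Real.Gamma (N + 1) / Real.Gamma (N + j + γ + 1)) := by
  have hs (j : ℕ) : 0 ≤ (j : ℝ) + γ := by positivity
  have hmean := kth_nearest_distance_series_general hk hkN hbij.surjOn hinv.1 hs fun w hw =>
    hser w hw ▸ (hsum w hw).hasSum
  simpa only [add_assoc] using hmean.tsum_eq.symm
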